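/- On ℝ (n = 1), let ψ = χ_{(0,1)} − χ_{(−1,0)}, ψ_t(x) = t^{-1}ψ(t^{-1}x), and b = χ_{(0,1)}. Then the measure dμ(x,t) = |ψ_t * b(x)|^2 (dt/t) dx is a Carleson measure on ℝ^2_+ = ℝ × (0,∞), but it is not a strong Carleson measure: for every x ∈ (−1,0), ∫_0^1 |ψ_t * b(x)|^2 dt/t ≥ −log(−x) − 2, and hence sup_{x ∈ (−1,0)} ∫_0^1 |ψ_t * b(x)|^2 dt/t = ∞. -/

import Mathlib

open MeasureTheory Real Set Filter
open scoped ENNReal NNReal Topology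

noncomputable section

/-- `ψ = χ_{(0,1)} − χ_{(−1,0)}` -/
def psi : ℝ → ℝ :=
  (Ioo (0:ℝ) 1).indicator (fun _ => (1:ℝ)) - (Ioo (-1:ℝ) 0).indicator (fun _ => (1:ℝ))

/-- `b = χ_{(0,1)}` -/
def bfun : ℝ → ℝ := (Ioo (0:ℝ) 1).indicator (fun _ => (1:ℝ))

/-- `(ψ_t * b)(x)` where `ψ_t(x) = t⁻¹ ψ(t⁻¹ x)` -/
def psiConv (t x : ℝ) : ℝ := ∫ y : ℝ, t⁻¹ * psi (t⁻¹ * (x - y)) * bfun y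

/-!
Convolving with `ψ_t` takes a second difference at scale `t`: if `R` is the primitive of `b`, then
`ψ_t * b (x) = t⁻¹ (2 R(x) - R(x - t) - R(x + t))`. Since `R` is monotone and `1`-Lipschitz, this is
at most `1` in absolute value, and since `R` is affine off the jumps `0` and `1` of `b`, it vanishes
unless `x` lies within `t` of a jump. So `μ` is dominated by `(dt/t) dx` on the cones over the two
jumps, whose sections at height `t` have length `2t`; this gives the Carleson bound. For
`-1 < x < 0` the vertical segment over `x` lies in the cone over `0` from height `-x` on, and there
`ψ_t * b (x) = -(1 + x / t)`, so that `∫ |ψ_t * b (x)|² dt/t` is at least `∫_{-x}^1 dt/t` up to a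
bounded error, which diverges logarithmically as `x → 0`.
-/

theorem isOpen_setOf_mem_thickening {α : Type*} [PseudoMetricSpace α] (S : Set α) :
    IsOpen {p : α × ℝ | p.1 ∈ Metric.thickening p.2 S} := by
  have h_union : {p : α × ℝ | p.1 ∈ Metric.thickening p.2 S} =
      ⋃ c ∈ S, {p : α × ℝ | dist p.1 c < p.2} := by
    ext p
    simp [Metric.mem_thickening_iff]
  rw [h_union]
  exact isOpen_biUnion fun c _ => isOpen_lt (by fun_prop) (by fun_prop)

theorem volume_thickening_finset_le (S : Finset ℝ) (t : ℝ) :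
    volume (Metric.thickening t (S : Set ℝ)) ≤ S.card * ENNReal.ofReal (2 * t) := by
  rw [Metric.thickening_eq_biUnion_ball]
  refine (measure_biUnion_finset_le S _).trans_eq ?_
  simp only [Real.volume_ball, Finset.sum_const, nsmul_eq_mul]

theorem lintegral_lintegral_le_of_eq_zero_of_notMem_thickening {F : ℝ → ℝ → ℝ≥0∞} {h : ℝ}
    (S : Finset ℝ) (A : Set ℝ)
    (hF_le : ∀ x, ∀ t ∈ Ioc 0 h, F x t ≤ ENNReal.ofReal t⁻¹)
    (hF_zero : ∀ x, ∀ t ∈ Ioc 0 h, x ∉ Metric.thickening t (S : Set ℝ) → F x t = 0) :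
    ∫⁻ x in A, ∫⁻ t in Ioc 0 h, F x t ≤ 2 * S.card * ENNReal.ofReal h := by
  let cone : Set (ℝ × ℝ) := {p | p.1 ∈ Metric.thickening p.2 (S : Set ℝ)}
  let K : ℝ × ℝ → ℝ≥0∞ := cone.indicator fun p => ENNReal.ofReal p.2⁻¹
  have hK : Measurable K :=
    Measurable.indicator (by fun_prop) (isOpen_setOf_mem_thickening _).measurableSet
  have hFK : ∀ x, ∀ t ∈ Ioc 0 h, F x t ≤ K (x, t) := fun x t ht => by
    by_cases hx : (x, t) ∈ cone
    · exact (hF_le x t ht).trans_eq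
        (indicator_of_mem hx fun p : ℝ × ℝ => ENNReal.ofReal p.2⁻¹).symm
    · exact (hF_zero x t ht hx).trans_le zero_le
  have h_section : ∀ t ∈ Ioc 0 h, ∫⁻ x in A, K (x, t) ≤ 2 * S.card := fun t ht =>
    calc ∫⁻ x in A, K (x, t)
        ≤ ∫⁻ x, K (x, t) := setLIntegral_le_lintegral _ _
      _ = ∫⁻ x, (Metric.thickening t (S : Set ℝ)).indicator (fun _ => ENNReal.ofReal t⁻¹) x := rfl
      _ = ENNReal.ofReal t⁻¹ * volume (Metric.thickening t (S : Set ℝ)) :=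
          lintegral_indicator_const Metric.isOpen_thickening.measurableSet _
      _ ≤ ENNReal.ofReal t⁻¹ * (S.card * ENNReal.ofReal (2 * t)) := by
          gcongr
          exact volume_thickening_finset_le S t
      _ = 2 * S.card := by
          rw [mul_left_comm, ← ENNReal.ofReal_mul (inv_nonneg.2 ht.1.le), mul_left_comm,
            inv_mul_cancel₀ ht.1.ne', mul_comm]
          simp
  calc ∫⁻ x in A, ∫⁻ t in Ioc 0 h, F x t
      ≤ ∫⁻ x in A, ∫⁻ t in Ioc 0 h, K (x, t) :=
        lintegral_mono fun x => setLIntegral_mono' measurableSet_Ioc (hFK x)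
    _ = ∫⁻ t in Ioc 0 h, ∫⁻ x in A, K (x, t) :=
        lintegral_lintegral_swap (f := fun x t => K (x, t)) hK.aemeasurable
    _ ≤ ∫⁻ _ in Ioc 0 h, 2 * S.card := setLIntegral_mono' measurableSet_Ioc h_section
    _ = 2 * S.card * ENNReal.ofReal h := by simp

/-- The primitive `x ↦ ∫_{-∞}^x χ_{(0,1)}` of `bfun`, which clamps `x` to `[0, 1]`. -/
def unitRamp (x : ℝ) : ℝ := max 0 (min x 1)

theorem unitRamp_of_nonpos {x : ℝ} (hx : x ≤ 0) : unitRamp x = 0 :=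
  max_eq_left ((min_le_left x 1).trans hx)

theorem unitRamp_of_mem_Icc {x : ℝ} (hx : x ∈ Icc (0 : ℝ) 1) : unitRamp x = x := by
  rw [unitRamp, min_eq_left hx.2, max_eq_right hx.1]

theorem unitRamp_of_one_le {x : ℝ} (hx : 1 ≤ x) : unitRamp x = 1 := by
  rw [unitRamp, min_eq_right hx, max_eq_right zero_le_one]

theorem unitRamp_sub_mem_Icc {a b : ℝ} (hab : a ≤ b) :
    unitRamp b - unitRamp a ∈ Icc 0 (b - a) := by
  simp only [unitRamp, mem_Icc]
  grind

theorem intervalIntegrable_bfun (a b : ℝ) : IntervalIntegrable bfun volume a b :=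
  ((integrableOn_const (by simp)).integrable_indicator measurableSet_Ioo).intervalIntegrable

theorem intervalIntegral_bfun (a b : ℝ) : ∫ y in a..b, bfun y = unitRamp b - unitRamp a := by
  wlog hab : a ≤ b generalizing a b
  · rw [intervalIntegral.integral_symm, this b a (le_of_not_ge hab), neg_sub]
  rw [intervalIntegral.integral_of_le hab, integral_Ioc_eq_integral_Ioo, bfun,
    setIntegral_indicator measurableSet_Ioo, Ioo_inter_Ioo, setIntegral_const, smul_eq_mul, mul_one,
    Real.volume_real_Ioo]
  simp only [unitRamp]
  grind

theorem psi_inv_mul_sub {t : ℝ} (ht : 0 < t) (x y : ℝ) :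
    psi (t⁻¹ * (x - y)) =
      (Ioo (x - t) x).indicator (fun _ => 1) y - (Ioo x (x + t)).indicator (fun _ => 1) y := by
  have h_left : t⁻¹ * (x - y) ∈ Ioo (0 : ℝ) 1 ↔ y ∈ Ioo (x - t) x := by
    rw [inv_mul_eq_div, mem_Ioo, div_lt_one ht, div_pos_iff_of_pos_right ht, mem_Ioo]
    grind
  have h_right : t⁻¹ * (x - y) ∈ Ioo (-1 : ℝ) 0 ↔ y ∈ Ioo x (x + t) := by
    rw [inv_mul_eq_div, mem_Ioo, lt_div_iff₀ ht, div_lt_iff₀ ht, mem_Ioo]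
    grind
  classical
  simp only [psi, Pi.sub_apply, indicator_apply, h_left, h_right]

theorem integral_dilated_psi_mul {f : ℝ → ℝ} {t x : ℝ} (ht : 0 < t)
    (hf_left : IntervalIntegrable f volume (x - t) x)
    (hf_right : IntervalIntegrable f volume x (x + t)) :
    ∫ y, t⁻¹ * psi (t⁻¹ * (x - y)) * f y =
      t⁻¹ * ((∫ y in (x - t)..x, f y) - ∫ y in x..(x + t), f y) := by
  have hx_left : x - t ≤ x := by linarith
  have hx_right : x ≤ x + t := by linarith
  have h_integrand : ∀ y, t⁻¹ * psi (t⁻¹ * (x - y)) * f y =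
      t⁻¹ * ((Ioo (x - t) x).indicator f y - (Ioo x (x + t)).indicator f y) := fun y => by
    rw [psi_inv_mul_sub ht, mul_assoc, sub_mul, ← indicator_mul_left, ← indicator_mul_left]
    simp only [one_mul]
  simp_rw [h_integrand]
  rw [integral_const_mul, integral_sub, integral_indicator measurableSet_Ioo,
    integral_indicator measurableSet_Ioo, intervalIntegral.integral_of_le hx_left,
    intervalIntegral.integral_of_le hx_right, integral_Ioc_eq_integral_Ioo,
    integral_Ioc_eq_integral_Ioo]
  · exact ((intervalIntegrable_iff_integrableOn_Ioo_of_le hx_left).1 hf_left).integrable_indicator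
      measurableSet_Ioo
  · exact ((intervalIntegrable_iff_integrableOn_Ioo_of_le hx_right).1
      hf_right).integrable_indicator measurableSet_Ioo

theorem psiConv_eq_unitRamp {t : ℝ} (ht : 0 < t) (x : ℝ) :
    psiConv t x =
      t⁻¹ * ((unitRamp x - unitRamp (x - t)) - (unitRamp (x + t) - unitRamp x)) := by
  rw [psiConv, integral_dilated_psi_mul ht (intervalIntegrable_bfun _ _)
    (intervalIntegrable_bfun _ _), intervalIntegral_bfun, intervalIntegral_bfun]

theorem abs_psiConv_le_one {t : ℝ} (ht : 0 < t) (x : ℝ) : |psiConv t x| ≤ 1 := by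
  obtain ⟨h_left_nonneg, h_left_le⟩ := unitRamp_sub_mem_Icc (sub_le_self x ht.le)
  obtain ⟨h_right_nonneg, h_right_le⟩ := unitRamp_sub_mem_Icc (le_add_of_nonneg_right ht.le : x ≤ _)
  rw [psiConv_eq_unitRamp ht, abs_mul, abs_of_pos (inv_pos.2 ht), inv_mul_le_iff₀ ht, mul_one,
    abs_le]
  constructor <;> linarith

theorem psiConv_eq_zero {t x : ℝ} (ht : 0 < t) (h_zero : t ≤ |x|) (h_one : t ≤ |x - 1|) :
    psiConv t x = 0 := by
  rw [psiConv_eq_unitRamp ht]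
  rcases le_abs.1 h_zero with h_pos | h_neg
  · rcases le_abs.1 h_one with h_right | h_mid
    · rw [unitRamp_of_one_le (by linarith : 1 ≤ x), unitRamp_of_one_le (by linarith : 1 ≤ x - t),
        unitRamp_of_one_le (by linarith : 1 ≤ x + t), sub_self, mul_zero]
    · rw [unitRamp_of_mem_Icc (by constructor <;> linarith : x ∈ Icc 0 1),
        unitRamp_of_mem_Icc (by constructor <;> linarith : x - t ∈ Icc 0 1),
        unitRamp_of_mem_Icc (by constructor <;> linarith : x + t ∈ Icc 0 1)]
      ring
  · rw [unitRamp_of_nonpos (by linarith : x ≤ 0), unitRamp_of_nonpos (by linarith : x - t ≤ 0),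
      unitRamp_of_nonpos (by linarith : x + t ≤ 0), sub_self, mul_zero]

theorem psiConv_of_nonpos {t x : ℝ} (ht : 0 < t) (hx : x ≤ 0) (hxt : x + t ∈ Icc (0 : ℝ) 1) :
    psiConv t x = -(1 + x / t) := by
  rw [psiConv_eq_unitRamp ht, unitRamp_of_nonpos hx, unitRamp_of_nonpos (by linarith : x - t ≤ 0),
    unitRamp_of_mem_Icc hxt]
  field_simp
  ring

theorem lintegral_lintegral_psiConv_sq_le (A : Set ℝ) (h : ℝ) :
    ∫⁻ x in A, ∫⁻ t in Ioc (0 : ℝ) h, ENNReal.ofReal ((psiConv t x) ^ 2 * t⁻¹) ≤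
      4 * ENNReal.ofReal h := by
  have h_le : ∀ x, ∀ t ∈ Ioc 0 h,
      ENNReal.ofReal ((psiConv t x) ^ 2 * t⁻¹) ≤ ENNReal.ofReal t⁻¹ := fun x t ht =>
    ENNReal.ofReal_le_ofReal <| mul_le_of_le_one_left (inv_nonneg.2 ht.1.le) <|
      (sq_le_one_iff_abs_le_one _).2 (abs_psiConv_le_one ht.1 x)
  have h_zero : ∀ x, ∀ t ∈ Ioc 0 h, x ∉ Metric.thickening t (({0, 1} : Finset ℝ) : Set ℝ) →
      ENNReal.ofReal ((psiConv t x) ^ 2 * t⁻¹) = 0 := fun x t ht hx => by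
    have h_far : t ≤ |x| ∧ t ≤ |x - 1| := by
      simpa [Metric.mem_thickening_iff, Real.dist_eq] using hx
    simp [psiConv_eq_zero ht.1 h_far.1 h_far.2]
  refine (lintegral_lintegral_le_of_eq_zero_of_notMem_thickening _ A h_le h_zero).trans_eq ?_
  norm_num

theorem integral_inv_add_mul_sq_inv {r s : ℝ} (hs : 0 < s) (hr : 0 < r) (a : ℝ) :
    ∫ t in s..r, (t⁻¹ + a * (t ^ 2)⁻¹) = Real.log (r / s) + a * (s⁻¹ - r⁻¹) := by
  have h_ne : ∀ t ∈ uIcc s r, t ≠ 0 := fun t ht => ((lt_min hs hr).trans_le ht.1).ne'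
  have h_deriv : ∀ t ∈ uIcc s r,
      HasDerivAt (fun t => Real.log t - a * t⁻¹) (t⁻¹ + a * (t ^ 2)⁻¹) t := fun t ht => by
    refine ((Real.hasDerivAt_log (h_ne t ht)).sub
      ((hasDerivAt_inv (h_ne t ht)).const_mul a)).congr_deriv ?_
    ring
  have h_int : IntervalIntegrable (fun t => t⁻¹ + a * (t ^ 2)⁻¹) volume s r := by
    refine ContinuousOn.intervalIntegrable ?_
    fun_prop (disch := simpa using h_ne)
  rw [intervalIntegral.integral_eq_sub_of_hasDerivAt h_deriv h_int, Real.log_div hr.ne' hs.ne']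
  ring

theorem inv_add_two_mul_sq_inv_le (x : ℝ) {t : ℝ} (ht : 0 < t) :
    t⁻¹ + 2 * x * (t ^ 2)⁻¹ ≤ (1 + x / t) ^ 2 * t⁻¹ := by
  have h_diff : (1 + x / t) ^ 2 * t⁻¹ - (t⁻¹ + 2 * x * (t ^ 2)⁻¹) = (x / t) ^ 2 * t⁻¹ := by
    field_simp
    ring
  exact sub_nonneg.1 (h_diff ▸ by positivity)

theorem ofReal_integral_le_lintegral_ofReal {α : Type*} [MeasurableSpace α] (μ : Measure α)
    (f : α → ℝ) : ENNReal.ofReal (∫ a, f a ∂μ) ≤ ∫⁻ a, ENNReal.ofReal (f a) ∂μ := by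
  by_cases hf : Integrable f μ
  · rw [integral_eq_lintegral_pos_part_sub_lintegral_neg_part hf]
    exact (ENNReal.ofReal_le_ofReal (sub_le_self _ ENNReal.toReal_nonneg)).trans
      ENNReal.ofReal_toReal_le
  · rw [integral_undef hf, ENNReal.ofReal_zero]
    exact zero_le

theorem ofReal_neg_log_sub_two_le_lintegral_psiConv_sq {x : ℝ} (hx : x ∈ Ioo (-1 : ℝ) 0) :
    ENNReal.ofReal (-Real.log (-x) - 2) ≤
      ∫⁻ t in Ioc (0 : ℝ) 1, ENNReal.ofReal ((psiConv t x) ^ 2 * t⁻¹) := by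
  obtain ⟨hx_gt, hx_neg⟩ := hx
  have h_log : -Real.log (-x) - 2 ≤ ∫ t in (-x)..1, (t⁻¹ + 2 * x * (t ^ 2)⁻¹) := by
    rw [integral_inv_add_mul_sq_inv (neg_pos.2 hx_neg) one_pos, one_div, Real.log_inv, mul_sub,
      inv_neg, mul_neg, mul_inv_cancel_right₀ hx_neg.ne]
    linarith
  have h_le : ∀ t ∈ Ioc (-x) 1, t⁻¹ + 2 * x * (t ^ 2)⁻¹ ≤ (psiConv t x) ^ 2 * t⁻¹ :=
    fun t ⟨ht_gt, ht_le⟩ => by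
      have ht : 0 < t := by linarith
      rw [psiConv_of_nonpos ht hx_neg.le ⟨by linarith, by linarith⟩, neg_sq]
      exact inv_add_two_mul_sq_inv_le x ht
  calc ENNReal.ofReal (-Real.log (-x) - 2)
      ≤ ENNReal.ofReal (∫ t in Ioc (-x) 1, (t⁻¹ + 2 * x * (t ^ 2)⁻¹)) :=
        ENNReal.ofReal_le_ofReal <|
          h_log.trans_eq (intervalIntegral.integral_of_le (by linarith))
    _ ≤ ∫⁻ t in Ioc (-x) 1, ENNReal.ofReal (t⁻¹ + 2 * x * (t ^ 2)⁻¹) :=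
        ofReal_integral_le_lintegral_ofReal _ _
    _ ≤ ∫⁻ t in Ioc (-x) 1, ENNReal.ofReal ((psiConv t x) ^ 2 * t⁻¹) :=
        setLIntegral_mono' measurableSet_Ioc fun t ht => ENNReal.ofReal_le_ofReal (h_le t ht)
    _ ≤ ∫⁻ t in Ioc (0 : ℝ) 1, ENNReal.ofReal ((psiConv t x) ^ 2 * t⁻¹) :=
        lintegral_mono_set (Ioc_subset_Ioc_left (neg_pos.2 hx_neg).le)

theorem tendsto_ofReal_neg_log_neg_sub (c : ℝ) :
    Tendsto (fun x => ENNReal.ofReal (-Real.log (-x) - c)) (𝓝[<] 0) (𝓝 ∞) := by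
  simp_rw [Real.log_neg_eq_log]
  exact ENNReal.tendsto_ofReal_nhds_top.2 <| tendsto_atTop_add_const_right _ _ <|
    tendsto_neg_atBot_atTop.comp Real.tendsto_log_nhdsLT_zero

/-- Example 3.8: the measure `|ψ_t*b(x)|² (dt/t) dx` is a Carleson measure
on `ℝ²₊` but not a strong Carleson measure: for each `x ∈ (−1,0)` one has
`∫_0^1 |ψ_t*b(x)|² dt/t ≥ −log(−x) − 2`, hence the supremum over `x ∈ (−1,0)` is infinite. -/
theorem stmt19 :
    (∃ B : ℝ≥0∞, B ≠ ⊤ ∧ ∀ (a h : ℝ), 0 < h →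
        ∫⁻ x in Icc a (a + h), ∫⁻ t in Ioc (0:ℝ) h,
          ENNReal.ofReal ((psiConv t x) ^ 2 * t⁻¹) ≤ B * ENNReal.ofReal h) ∧
      (∀ x ∈ Ioo (-1:ℝ) 0,
        ENNReal.ofReal (-Real.log (-x) - 2) ≤
          ∫⁻ t in Ioc (0:ℝ) 1, ENNReal.ofReal ((psiConv t x) ^ 2 * t⁻¹)) ∧
      (⨆ x ∈ Ioo (-1:ℝ) 0,
          ∫⁻ t in Ioc (0:ℝ) 1, ENNReal.ofReal ((psiConv t x) ^ 2 * t⁻¹)) = ⊤ := by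
  refine ⟨⟨4, by simp, fun a h _ => lintegral_lintegral_psiConv_sq_le (Icc a (a + h)) h⟩,
    fun x hx => ofReal_neg_log_sub_two_le_lintegral_psiConv_sq hx, top_unique ?_⟩
  have h_near_zero : ∀ᶠ x in 𝓝[<] (0 : ℝ), x ∈ Ioo (-1 : ℝ) 0 :=
    Ioo_mem_nhdsLT (by norm_num)
  refine le_of_tendsto (tendsto_ofReal_neg_log_neg_sub 2) (h_near_zero.mono fun x hx => ?_)
  exact le_iSup₂_of_le x hx (ofReal_neg_log_sub_two_le_lintegral_psiConv_sq hx)
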